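/- arXiv:1610.03301 — 2 statements merged into one kernel-verified Lean document; each statement's English description precedes it below -/
import Mathlib

section
/- Let k ≥ 5 and let σ, τ ∈ Equiv.Perm (Fin k) be permutations with orderOf σ ≠ orderOf τ such that Subgroup.closure {σ, τ} = ⊤ or Subgroup.closure {σ, τ} = alternatingGroup (Fin k). Then there exists a prime p and a p-cycle π ∈ Equiv.Perm (Fin k) such that (1, π) belongs to the group circularly generated by the pair (σ, τ). -/
/-- The group circularly generated by a pair `(σ, τ)` of permutations: the subgroup
of `Equiv.Perm (Fin k) × Equiv.Perm (Fin k)` generated by `(σ, τ)` and `(τ, σ)`. -/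
def circGenPair {k : ℕ} (σ τ : Equiv.Perm (Fin k)) :
    Subgroup (Equiv.Perm (Fin k) × Equiv.Perm (Fin k)) :=
  Subgroup.closure {(σ, τ), (τ, σ)}

/-!
Let `I` be the group generated by `(σ, τ)` and `(τ, σ)`, and let `N` be the group of all `π` with
`(1, π) ∈ I` (the second Goursat subgroup of `I`). The second projection of `I` is generated by
`σ` and `τ`, so it contains the alternating group; it normalizes `N`. If `N` were trivial, `I` would
be the graph of a homomorphism sending `σ` to `τ` and `τ` to `σ`, which forces the orders to agree.
By simplicity of the alternating group, `N` contains it, and with it a 3-cycle, unless the two meet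
trivially; in that case they commute, which is impossible because only `1` centralizes the
alternating group.
-/

section Goursat

open Subgroup

variable {G H : Type*} [Group G] [Group H]

theorem map_snd_le_normalizer_goursatSnd (I : Subgroup (G × H)) :
    I.map (MonoidHom.snd G H) ≤ normalizer I.goursatSnd := by
  rw [le_normalizer_iff]
  rintro _ ⟨⟨a, b⟩, hab, rfl⟩ n hn
  simpa using mul_mem (mul_mem hab (mem_goursatSnd.1 hn)) (inv_mem hab)

theorem orderOf_snd_dvd_orderOf_fst {I : Subgroup (G × H)} (hI : I.goursatSnd = ⊥)
    {x : G × H} (hx : x ∈ I) : orderOf x.2 ∣ orderOf x.1 := by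
  have hpow : x.2 ^ orderOf x.1 ∈ I.goursatSnd := by
    rw [mem_goursatSnd, ← pow_orderOf_eq_one x.1]
    exact pow_mem hx (orderOf x.1)
  rw [hI, mem_bot] at hpow
  exact orderOf_dvd_of_pow_eq_one hpow

theorem map_snd_closure_pair_swap (σ τ : G) :
    (closure {(σ, τ), (τ, σ)}).map (MonoidHom.snd G G) = closure {σ, τ} := by
  simp [MonoidHom.map_closure, Set.image_pair, Set.pair_comm]

theorem goursatSnd_closure_pair_swap_ne_bot {σ τ : G} (horder : orderOf σ ≠ orderOf τ) :
    (closure {(σ, τ), (τ, σ)}).goursatSnd ≠ ⊥ := by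
  intro hbot
  refine horder (Nat.dvd_antisymm ?_ ?_)
  · exact orderOf_snd_dvd_orderOf_fst hbot (x := (τ, σ)) (subset_closure (by simp))
  · exact orderOf_snd_dvd_orderOf_fst hbot (x := (σ, τ)) (subset_closure (by simp))

end Goursat

section Alternating

open Subgroup

variable {α : Type*} [Fintype α] [DecidableEq α]

theorem centralizer_alternatingGroup_eq_bot (hα : 5 ≤ Nat.card α) :
    centralizer (alternatingGroup α : Set (Equiv.Perm α)) = ⊥ := by
  by_contra hne
  have hle : alternatingGroup α ≤ centralizer (alternatingGroup α) :=
    Equiv.Perm.alternatingGroup_le_of_normal hα ((nontrivial_iff_ne_bot _).2 hne)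
  have hcard : Nat.card α ≤ 3 :=
    alternatingGroup.isMulCommutative_iff_card_le_three.1
      (le_centralizer_iff_isMulCommutative.1 hle)
  lia

theorem alternatingGroup_le_of_le_normalizer (hα : 5 ≤ Nat.card α)
    {N : Subgroup (Equiv.Perm α)} (hN : N ≠ ⊥) (hnorm : alternatingGroup α ≤ normalizer N) :
    alternatingGroup α ≤ N := by
  have := normal_subgroupOf_of_le_normalizer hnorm
  rcases alternatingGroup.normal_subgroup_eq_bot_or_eq_top hα
    (N := N.subgroupOf (alternatingGroup α)) with hbot | htop
  · have hcomm : ⁅N, alternatingGroup α⁆ = ⊥ := by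
      rw [eq_bot_iff, ← (subgroupOf_eq_bot.1 hbot).eq_bot]
      exact le_inf (le_normalizer_iff_commutator_le_left.1 hnorm) (commutator_le_right _ _)
    rw [commutator_eq_bot_iff_le_centralizer, centralizer_alternatingGroup_eq_bot hα] at hcomm
    exact absurd (le_bot_iff.1 hcomm) hN
  · exact subgroupOf_eq_top.1 htop

theorem exists_isThreeCycle (hα : 3 ≤ Nat.card α) :
    ∃ π : Equiv.Perm α, π.IsThreeCycle := by
  rw [Nat.card_eq_fintype_card] at hα
  obtain ⟨a, b, c, hab, hac, hbc⟩ := Fintype.two_lt_card_iff.1 hα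
  exact ⟨_, Equiv.Perm.isThreeCycle_swap_mul_swap_same hab hac hbc⟩

theorem alternatingGroup_le_goursatSnd_closure_pair_swap (hα : 5 ≤ Nat.card α)
    {σ τ : Equiv.Perm α} (horder : orderOf σ ≠ orderOf τ)
    (hgen : alternatingGroup α ≤ closure {σ, τ}) :
    alternatingGroup α ≤ (closure {(σ, τ), (τ, σ)}).goursatSnd := by
  refine alternatingGroup_le_of_le_normalizer hα (goursatSnd_closure_pair_swap_ne_bot horder) ?_
  rw [← map_snd_closure_pair_swap] at hgen
  exact hgen.trans (map_snd_le_normalizer_goursatSnd _)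

theorem exists_cycle_mem_circGenPair_general (hα : 5 ≤ Nat.card α)
    {σ τ : Equiv.Perm α} (horder : orderOf σ ≠ orderOf τ)
    (hgen : alternatingGroup α ≤ closure {σ, τ}) :
    ∃ π : Equiv.Perm α, π.IsThreeCycle ∧
      (1, π) ∈ closure {(σ, τ), (τ, σ)} := by
  obtain ⟨π, hπ⟩ := exists_isThreeCycle (α := α) (by lia)
  exact ⟨π, hπ, mem_goursatSnd.1 <|
    alternatingGroup_le_goursatSnd_closure_pair_swap hα horder hgen hπ.mem_alternatingGroup⟩

end Alternating

/-- If `σ` and `τ` have different orders and generate `S_k` or `A_k`, then the group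
circularly generated by `(σ, τ)` contains `(1, π)` for some prime-length cycle `π`. -/
theorem exists_cycle_mem_circGenPair {k : ℕ} (hk : 5 ≤ k)
    (σ τ : Equiv.Perm (Fin k)) (horder : orderOf σ ≠ orderOf τ)
    (hgen : Subgroup.closure {σ, τ} = ⊤ ∨
      Subgroup.closure {σ, τ} = alternatingGroup (Fin k)) :
    ∃ (p : ℕ) (π : Equiv.Perm (Fin k)), p.Prime ∧ π.IsCycle ∧ π.support.card = p ∧
      (1, π) ∈ circGenPair σ τ := by
  obtain ⟨π, hπ, hmem⟩ := exists_cycle_mem_circGenPair_general (by simpa using hk) horder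
    (hgen.elim (fun h ↦ h ▸ le_top) (fun h ↦ h.ge))
  exact ⟨3, π, Nat.prime_three, hπ.isCycle, hπ.card_support, hmem⟩
end

section
/- Let k > 5 and let σ, τ ∈ Equiv.Perm (Fin k) satisfy orderOf σ ≠ orderOf τ, Subgroup.closure {σ, τ} = ⊤ or Subgroup.closure {σ, τ} = alternatingGroup (Fin k), and Equiv.Perm.sign σ = 1 and Equiv.Perm.sign τ = 1. Then the group circularly generated by the pair (σ, τ) equals (alternatingGroup (Fin k)).prod (alternatingGroup (Fin k)), i.e. A_k × A_k. -/
/-!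
Let `a`, `b` generate a simple group `G`, and let `I ≤ G × G` be generated by `(a, b)` and
`(b, a)`. Both projections of `I` are onto, so `{g | (g, 1) ∈ I}` is a normal subgroup of `G`.
If `orderOf a ∤ orderOf b`, it contains the nontrivial element `a ^ orderOf b`, the first
coordinate of `(a, b) ^ orderOf b`. By simplicity it is `G`, so `I` contains `G × 1`; as `I`
projects onto the second factor, `I = G × G`. The roles of `a` and `b` are symmetric, so
`orderOf a ≠ orderOf b` suffices. For `5 ≤ k` the group `A_k` is simple.
-/

open Function Subgroup

section Goursat

variable {G H : Type*} [Group G] [Group H]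

theorem surjective_comp_closure_subtype_iff (f : G →* H) (s : Set G) :
    Surjective (f ∘ (closure s).subtype) ↔ closure (f '' s) = ⊤ := by
  rw [← MonoidHom.coe_comp, ← MonoidHom.range_eq_top, MonoidHom.range_comp, range_subtype,
    MonoidHom.map_closure]

variable {I : Subgroup (G × H)}

theorem eq_top_of_goursatFst_eq_top (hI₂ : Surjective (Prod.snd ∘ I.subtype))
    (hI : I.goursatFst = ⊤) : I = ⊤ := by
  refine (eq_top_iff' I).2 fun ⟨g, h⟩ ↦ ?_
  obtain ⟨⟨⟨x, _⟩, hx⟩, rfl⟩ := hI₂ h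
  have hgx : (g * x⁻¹, 1) ∈ I := mem_goursatFst.1 (hI ▸ mem_top _)
  simpa using mul_mem hgx hx

theorem eq_top_of_mk_one_mem [IsSimpleGroup G] (hI₁ : Surjective (Prod.fst ∘ I.subtype))
    (hI₂ : Surjective (Prod.snd ∘ I.subtype)) {g : G} (hg : g ≠ 1) (hgI : (g, 1) ∈ I) :
    I = ⊤ := by
  refine eq_top_of_goursatFst_eq_top hI₂ ?_
  refine (normal_goursatFst hI₁).eq_bot_or_eq_top.resolve_left fun hbot ↦ hg ?_
  rwa [← mem_goursatFst, hbot, mem_bot] at hgI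

end Goursat

section SwappedPair

variable {G : Type*} [Group G] {a b : G}

theorem closure_swap_pair_eq_top_of_not_orderOf_dvd [IsSimpleGroup G]
    (hgen : closure {a, b} = ⊤) (hab : ¬ orderOf a ∣ orderOf b) :
    closure {(a, b), (b, a)} = ⊤ := by
  have hfst : Surjective (Prod.fst ∘ (closure {(a, b), (b, a)}).subtype) :=
    (surjective_comp_closure_subtype_iff (.fst G G) _).2 (by simpa [Set.image_pair] using hgen)
  have hsnd : Surjective (Prod.snd ∘ (closure {(a, b), (b, a)}).subtype) :=
    (surjective_comp_closure_subtype_iff (.snd G G) _).2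
      (by simpa [Set.image_pair, Set.pair_comm] using hgen)
  refine eq_top_of_mk_one_mem hfst hsnd (mt orderOf_dvd_of_pow_eq_one hab) ?_
  have hpow : (a, b) ^ orderOf b ∈ closure {(a, b), (b, a)} :=
    pow_mem (subset_closure (Set.mem_insert _ _)) _
  rwa [Prod.pow_mk, pow_orderOf_eq_one] at hpow

theorem closure_swap_pair_eq_top [IsSimpleGroup G] (hgen : closure {a, b} = ⊤)
    (hab : orderOf a ≠ orderOf b) : closure {(a, b), (b, a)} = ⊤ := by
  by_cases hdvd : orderOf a ∣ orderOf b
  · rw [Set.pair_comm] at hgen ⊢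
    exact closure_swap_pair_eq_top_of_not_orderOf_dvd hgen fun h ↦ hab (hdvd.antisymm h)
  · exact closure_swap_pair_eq_top_of_not_orderOf_dvd hgen hdvd

theorem circGenPair_eq_alternating_prod_general [IsSimpleGroup (closure {a, b})]
    (hab : orderOf a ≠ orderOf b) :
    closure {(a, b), (b, a)} = (closure {a, b}).prod (closure {a, b}) := by
  set K := closure {a, b}
  let a' : K := ⟨a, subset_closure (by simp)⟩
  let b' : K := ⟨b, subset_closure (by simp)⟩
  have hgen : closure {a', b'} = ⊤ :=
    map_injective K.subtype_injective <| by
      simp [MonoidHom.map_closure, Set.image_pair, ← MonoidHom.range_eq_map, a', b', K]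
  calc closure {(a, b), (b, a)}
      = (closure {(a', b'), (b', a')}).map (K.subtype.prodMap K.subtype) := by
        simp [MonoidHom.map_closure, Set.image_pair, a', b']
    _ = (K.subtype.prodMap K.subtype).range := by
        rw [closure_swap_pair_eq_top hgen (by simpa [a', b'] using hab), MonoidHom.range_eq_map]
    _ = K.prod K := by rw [MonoidHom.range_prodMap, range_subtype]

end SwappedPair

theorem closure_pair_eq_alternatingGroup {α : Type*} [Fintype α] [DecidableEq α]
    {σ τ : Equiv.Perm α} (hgen : closure {σ, τ} = ⊤ ∨ closure {σ, τ} = alternatingGroup α)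
    (hσ : Equiv.Perm.sign σ = 1) (hτ : Equiv.Perm.sign τ = 1) :
    closure {σ, τ} = alternatingGroup α := by
  refine hgen.elim (fun htop ↦ le_antisymm ?_ (htop ▸ le_top)) id
  simp [closure_le, Set.pair_subset_iff, Equiv.Perm.mem_alternatingGroup, hσ, hτ]

/-- If `σ, τ` have different orders, generate `S_k` or `A_k`, and are both even, then the
group circularly generated by `(σ, τ)` equals `A_k × A_k`. -/
theorem circGenPair_eq_alternating_prod {k : ℕ} (hk : 5 < k)
    (σ τ : Equiv.Perm (Fin k)) (horder : orderOf σ ≠ orderOf τ)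
    (hgen : Subgroup.closure {σ, τ} = ⊤ ∨
      Subgroup.closure {σ, τ} = alternatingGroup (Fin k))
    (hσ : Equiv.Perm.sign σ = 1) (hτ : Equiv.Perm.sign τ = 1) :
    circGenPair σ τ = (alternatingGroup (Fin k)).prod (alternatingGroup (Fin k)) := by
  have hA := closure_pair_eq_alternatingGroup hgen hσ hτ
  have : IsSimpleGroup (closure {σ, τ}) :=
    hA ▸ alternatingGroup.isSimpleGroup (by simpa using hk.le)
  exact hA ▸ circGenPair_eq_alternating_prod_general horder
end
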